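/- Let (ρ, u) be a weak solution of the stationary isentropic Navier–Stokes system on ℝ³ with exponent γ satisfying 3 ≤ γ < 6 and potential G ∈ D₀^{1, 6γ/(5γ−6)}(ℝ³). If ρ ∈ L^γ(ℝ³), then ρ ∈ L^{2γ}(ℝ³). -/

import Mathlib

noncomputable section

open MeasureTheory Metric Filter Topology Set

/-- Three-dimensional Euclidean space. -/
abbrev E3 : Type := EuclideanSpace ℝ (Fin 3)

/-- Partial derivative of a scalar function in the `i`-th coordinate direction. -/
def pd (f : E3 → ℝ) (i : Fin 3) : E3 → ℝ :=
  fun x => fderiv ℝ f x (EuclideanSpace.single i 1)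

/-- Classical gradient matrix of a vector field: `(tgrad φ x) i j = ∂_j φ_i (x)`. -/
def tgrad (φ : E3 → Fin 3 → ℝ) (x : E3) : Fin 3 → Fin 3 → ℝ :=
  fun i j => pd (fun y => φ y i) j x

/-- Smooth compactly supported scalar test function with support in `Ω`. -/
def IsTest (Ω : Set E3) (φ : E3 → ℝ) : Prop :=
  ContDiff ℝ ((⊤ : ℕ∞) : WithTop ℕ∞) φ ∧ HasCompactSupport φ ∧ tsupport φ ⊆ Ω

/-- `C^n` compactly supported vector-valued test function with support in `Ω`. -/
def IsTestVec (n : WithTop ℕ∞) (Ω : Set E3) (φ : E3 → Fin 3 → ℝ) : Prop :=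
  ContDiff ℝ n φ ∧ HasCompactSupport φ ∧ tsupport φ ⊆ Ω

/-- The Newtonian viscous stress tensor
`S(M) = μ (M + Mᵗ - (2/3) (tr M) I) + η (tr M) I`. -/
def Smat (μ η : ℝ) (M : Fin 3 → Fin 3 → ℝ) : Fin 3 → Fin 3 → ℝ :=
  fun i j =>
    μ * (M i j + M j i - (2 / 3) * (∑ k, M k k) * (if i = j then (1 : ℝ) else 0))
      + η * (∑ k, M k k) * (if i = j then (1 : ℝ) else 0)

/-- `dG` is the weak gradient of the scalar function `G` on `Ω`. -/
def HasWeakGradOn (Ω : Set E3) (G : E3 → ℝ) (dG : E3 → Fin 3 → ℝ) : Prop :=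
  ∀ φ : E3 → ℝ, IsTest Ω φ → ∀ i : Fin 3,
    ∫ x in Ω, G x * pd φ i x = - ∫ x in Ω, dG x i * φ x

/-- `du` is the weak gradient (Jacobian) of the vector field `u` on `Ω`. -/
def HasWeakGradVecOn (Ω : Set E3) (u : E3 → Fin 3 → ℝ) (du : E3 → Fin 3 → Fin 3 → ℝ) : Prop :=
  ∀ φ : E3 → ℝ, IsTest Ω φ → ∀ i j : Fin 3,
    ∫ x in Ω, u x i * pd φ j x = - ∫ x in Ω, du x i j * φ x

/-- `u ∈ D₀^{1,2}(Ω; ℝ³)` with weak gradient `du`: `u` is locally integrable on `Ω`, its weak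
gradient belongs to `L²(Ω)`, and `u` can be approximated by smooth compactly supported fields
`uₙ` with `∇uₙ → ∇u` in `L²(Ω)` and `uₙ → u` in `L⁶(Ω)`. -/
def MemD012 (Ω : Set E3) (u : E3 → Fin 3 → ℝ) (du : E3 → Fin 3 → Fin 3 → ℝ) : Prop :=
  LocallyIntegrableOn u Ω volume ∧
  HasWeakGradVecOn Ω u du ∧
  MemLp du 2 (volume.restrict Ω) ∧
  ∃ un : ℕ → E3 → Fin 3 → ℝ,
    (∀ n, IsTestVec ((⊤ : ℕ∞) : WithTop ℕ∞) Ω (un n)) ∧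
    Tendsto (fun n => eLpNorm (fun x => tgrad (un n) x - du x) 2 (volume.restrict Ω))
      atTop (𝓝 0) ∧
    Tendsto (fun n => eLpNorm (fun x => un n x - u x) 6 (volume.restrict Ω)) atTop (𝓝 0)

/-- `G ∈ D₀^{1,q}(Ω)` with weak gradient `dG`. -/
def MemD01q (Ω : Set E3) (G : E3 → ℝ) (dG : E3 → Fin 3 → ℝ) (q : ℝ) : Prop :=
  HasWeakGradOn Ω G dG ∧
  MemLp dG (ENNReal.ofReal q) (volume.restrict Ω) ∧
  ∃ Gn : ℕ → E3 → ℝ,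
    (∀ n, IsTest Ω (Gn n)) ∧
    Tendsto (fun n =>
        eLpNorm (fun x => (fun i => pd (Gn n) i x) - dG x) (ENNReal.ofReal q)
          (volume.restrict Ω)) atTop (𝓝 0) ∧
    ∀ K : Set E3, IsCompact K → K ⊆ Ω →
      Tendsto (fun n => ∫ x in K, |Gn n x - G x|) atTop (𝓝 0)

/-- `G ∈ W^{1,∞}(Ω)` with weak gradient `dG`: both `G` and `∇G` are essentially bounded. -/
def MemW1inf (Ω : Set E3) (G : E3 → ℝ) (dG : E3 → Fin 3 → ℝ) : Prop :=
  HasWeakGradOn Ω G dG ∧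
  MemLp G ⊤ (volume.restrict Ω) ∧ MemLp dG ⊤ (volume.restrict Ω)

/-- Weak solution `(ρ, u)` (with weak gradient `du` of `u` and weak gradient `dG` of `G`) of the
stationary barotropic Navier–Stokes system
`div(ρu) = 0`, `div(ρ u⊗u) + ∇p(ρ) − div S(∇u) = ρ∇G` on `Ω` with no-slip boundary condition. -/
structure WeakSolution (Ω : Set E3) (μ η : ℝ) (p : ℝ → ℝ)
    (G : E3 → ℝ) (dG : E3 → Fin 3 → ℝ)
    (ρ : E3 → ℝ) (u : E3 → Fin 3 → ℝ) (du : E3 → Fin 3 → Fin 3 → ℝ) : Prop where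
  aemeas_ρ : AEMeasurable ρ volume
  aemeas_u : AEMeasurable u volume
  weakGrad_G : HasWeakGradOn Ω G dG
  ρ_nonneg : ∀ᵐ x ∂(volume.restrict Ω), 0 ≤ ρ x
  ρu_locInt : LocallyIntegrableOn (fun x => fun i => ρ x * u x i) (closure Ω) volume
  mass : ∀ φ : E3 → ℝ, ContDiff ℝ ((⊤ : ℕ∞) : WithTop ℕ∞) φ → HasCompactSupport φ →
    ∫ x in Ω, ρ x * (∑ i, u x i * pd φ i x) = 0
  ρ_locInt : LocallyIntegrableOn ρ Ω volume
  ρu2_locInt : LocallyIntegrableOn (fun x => ρ x * (∑ i, (u x i) ^ 2)) Ω volume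
  pρ_locInt : LocallyIntegrableOn (fun x => p (ρ x)) Ω volume
  ρdG_locInt : LocallyIntegrableOn (fun x => fun i => ρ x * dG x i) Ω volume
  u_D012 : MemD012 Ω u du
  momentum : ∀ φ : E3 → Fin 3 → ℝ, IsTestVec 1 Ω φ →
    ∫ x in Ω, ((∑ i, ∑ j, ρ x * u x i * u x j * tgrad φ x i j)
        + p (ρ x) * (∑ i, tgrad φ x i i))
      = (∫ x in Ω, ∑ i, ∑ j, Smat μ η (du x) i j * tgrad φ x i j)
        - ∫ x in Ω, ∑ i, ρ x * dG x i * φ x i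

/-- Weak solution of the stationary isentropic Navier–Stokes system on `ℝ³`
with pressure `p(ρ) = ρ^γ`. -/
def IsentropicWeakSolution (μ η γ : ℝ) (G : E3 → ℝ) (dG : E3 → Fin 3 → ℝ)
    (ρ : E3 → ℝ) (u : E3 → Fin 3 → ℝ) (du : E3 → Fin 3 → Fin 3 → ℝ) : Prop :=
  WeakSolution univ μ η (fun s => s ^ γ) G dG ρ u du

/-- The `L^r` norm of a scalar function on a set. -/
def lpNormOn (f : E3 → ℝ) (r : ℝ) (s : Set E3) : ℝ :=
  (∫ x in s, |f x| ^ r) ^ (1 / r)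

/-- Euclidean norm of a vector in `ℝ³` (represented as `Fin 3 → ℝ`). -/
def vnorm (v : Fin 3 → ℝ) : ℝ := Real.sqrt (∑ i, (v i) ^ 2)

/-- The `L^r` norm of a vector field on a set. -/
def vecLpNormOn (u : E3 → Fin 3 → ℝ) (r : ℝ) (s : Set E3) : ℝ :=
  (∫ x in s, (vnorm (u x)) ^ r) ^ (1 / r)

/-- The exponent `f(α, γ)` from the higher-integrability propositions. -/
def fExp (α γ : ℝ) : ℝ :=
  if 6 ≤ γ then
    (if (2 * γ - 3) / (γ * (γ - 1)) ≤ α then α - 3 / (2 * γ)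
     else α / γ + 1 / (2 * γ) - 3 / γ ^ 2)
  else
    (if 3 / (2 * (γ - 1)) ≤ α then α - 3 / (2 * γ)
     else if 1 / (2 * (γ - 1)) ≤ α then α / γ
     else α / γ ^ 2 + 1 / (2 * γ ^ 2))

/-- The exponent `g(α, β, γ)`. -/
def gExp (α β γ : ℝ) : ℝ :=
  if fExp α γ ≤ (γ - 3) / (γ * (3 * γ - 5)) then
    γ * (1 - fExp α γ) * (6 - β) / (3 * β * (γ - 1))
  else (1 - γ * fExp α γ) * (6 - β) / (2 * β)

/-- Smooth functions. -/
abbrev Smooth (f : E3 → ℝ) : Prop := ContDiff ℝ ((⊤ : ℕ∞) : WithTop ℕ∞) f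

/-- Smooth compactly supported functions. -/
abbrev Tst (f : E3 → ℝ) : Prop := IsTest univ f

lemma Smooth.pd {f : E3 → ℝ} (hf : Smooth f) (i : Fin 3) : Smooth (pd f i) := by
  have h : ContDiff ℝ ((⊤ : ℕ∞) : WithTop ℕ∞) (fderiv ℝ f) := by
    apply ContDiff.fderiv_right hf
    simp
  exact h.clm_apply contDiff_const

lemma Smooth.differentiable' {f : E3 → ℝ} (hf : Smooth f) : Differentiable ℝ f :=
  hf.differentiable (by simp)

lemma Tst.mk' {f : E3 → ℝ} (h : Smooth f) (h' : HasCompactSupport f) : Tst f :=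
  ⟨h, h', subset_univ _⟩

lemma Tst.pd {f : E3 → ℝ} (hf : Tst f) (i : Fin 3) : Tst (pd f i) :=
  Tst.mk' (Smooth.pd hf.1 i) (hf.2.1.fderiv_apply (𝕜 := ℝ) _)

lemma Tst.mul_left {f g : E3 → ℝ} (hf : Tst f) (hg : Smooth g) : Tst (fun x => f x * g x) :=
  Tst.mk' (hf.1.mul hg) hf.2.1.mul_right

lemma Tst.integrable_mul {f g : E3 → ℝ} (hf : Tst f) (hg : Continuous g) :
    Integrable (fun x => f x * g x) volume :=
  (hf.1.continuous.mul hg).integrable_of_hasCompactSupport hf.2.1.mul_right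

lemma Tst.integrable_mul' {f g : E3 → ℝ} (hf : Tst f) (hg : Continuous g) :
    Integrable (fun x => g x * f x) volume := by
  simpa only [mul_comm] using hf.integrable_mul hg

lemma Tst.memLp {f : E3 → ℝ} (hf : Tst f) (p : ENNReal) : MemLp f p volume :=
  hf.1.continuous.memLp_of_hasCompactSupport hf.2.1

lemma pd_mul {f g : E3 → ℝ} (hf : Smooth f) (hg : Smooth g) (i : Fin 3) (x : E3) :
    pd (fun y => f y * g y) i x = f x * pd g i x + pd f i x * g x := by
  unfold pd
  rw [fderiv_fun_mul hf.differentiable'.differentiableAt hg.differentiable'.differentiableAt]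
  simp
  ring

lemma pd_comm {f : E3 → ℝ} (hf : Smooth f) (i j : Fin 3) :
    pd (pd f i) j = pd (pd f j) i := by
  funext x
  have hs : IsSymmSndFDerivAt ℝ f x :=
    (hf.contDiffAt (x := x)).isSymmSndFDerivAt (by
      rw [minSmoothness_of_isRCLikeNormedField]
      exact WithTop.coe_le_coe.2 (le_top : (2 : ℕ∞) ≤ ⊤))
  have hd : DifferentiableAt ℝ (fderiv ℝ f) x := by
    have h : ContDiff ℝ ((⊤ : ℕ∞) : WithTop ℕ∞) (fderiv ℝ f) := by
      apply ContDiff.fderiv_right hf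
      simp
    exact (h.differentiable (by simp)).differentiableAt
  have key : ∀ v w : E3, fderiv ℝ (fun y => fderiv ℝ f y v) x w = fderiv ℝ (fderiv ℝ f) x w v := by
    intro v w
    rw [fderiv_clm_apply hd (differentiableAt_const v)]
    simp
  unfold pd
  rw [key, key]
  exact hs.eq _ _

lemma ibp {f g : E3 → ℝ} (hf : Smooth f) (hg : Tst g) (i : Fin 3) :
    ∫ x, f x * pd g i x = - ∫ x, pd f i x * g x := by
  apply integral_mul_fderiv_eq_neg_fderiv_mul_of_integrable
  · exact hg.integrable_mul' (Smooth.pd hf i).continuous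
  · exact (Tst.pd hg i).integrable_mul' hf.continuous
  · exact hg.integrable_mul' hf.continuous
  · exact fun x _ => hf.differentiable'.differentiableAt
  · exact fun x _ => (Smooth.differentiable' hg.1).differentiableAt

/-- The Laplacian. -/
def lap (f : E3 → ℝ) : E3 → ℝ := fun x => ∑ i, pd (pd f i) i x

lemma Tst.lap {f : E3 → ℝ} (hf : Tst f) : Tst (lap f) := by
  refine Tst.mk' ?_ ?_
  · exact ContDiff.sum fun i _ => ((hf.pd i).pd i).1
  · have : _root_.lap f = fun x => _root_.pd (_root_.pd f 0) 0 x + _root_.pd (_root_.pd f 1) 1 x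
        + _root_.pd (_root_.pd f 2) 2 x := by
      funext x; simp [_root_.lap, Fin.sum_univ_three]
    rw [this]
    exact (((hf.pd 0).pd 0).2.1.add ((hf.pd 1).pd 1).2.1).add ((hf.pd 2).pd 2).2.1

lemma hess_ij {f : E3 → ℝ} (hf : Tst f) (i j : Fin 3) :
    ∫ x, pd (pd f i) j x ^ 2 = ∫ x, pd (pd f i) i x * pd (pd f j) j x := by
  have h1 := ibp ((hf.pd i).pd j).1 (hf.pd i) j
  have h2 := ibp ((hf.pd j).pd j).1 (hf.pd i) i
  have e : pd (pd (pd f i) j) j = pd (pd (pd f j) j) i := by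
    rw [pd_comm hf.1 i j, pd_comm (hf.pd j).1 i j]
  rw [e] at h1
  simp only [pow_two]
  rw [h1, ← h2]
  congr 1; funext x; ring

lemma hess_sum {f : E3 → ℝ} (hf : Tst f) :
    ∑ i, ∑ j, ∫ x, pd (pd f i) j x ^ 2 = ∫ x, lap f x ^ 2 := by
  simp_rw [hess_ij hf]
  have hI : ∀ i j, Integrable (fun x => pd (pd f i) i x * pd (pd f j) j x) volume := fun i j =>
    ((hf.pd i).pd i).integrable_mul ((hf.pd j).pd j).1.continuous
  rw [show (fun x => lap f x ^ 2) = fun x => ∑ i, ∑ j, pd (pd f i) i x * pd (pd f j) j x from ?_]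
  · rw [integral_finsetSum _ (fun i _ => integrable_finsetSum _ fun j _ => hI i j)]
    exact Finset.sum_congr rfl fun i _ => (integral_finsetSum _ fun j _ => hI i j).symm
  · funext x
    simp only [lap, pow_two, Finset.sum_mul_sum]

lemma hess_le {f : E3 → ℝ} (hf : Tst f) (i j : Fin 3) :
    ∫ x, pd (pd f i) j x ^ 2 ≤ ∫ x, lap f x ^ 2 := by
  rw [← hess_sum hf]
  have hn : ∀ i j, 0 ≤ ∫ x, pd (pd f i) j x ^ 2 := fun i j => integral_nonneg fun x => sq_nonneg _
  calc _ ≤ ∑ j, ∫ x, pd (pd f i) j x ^ 2 :=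
        Finset.single_le_sum (f := fun j => ∫ x, pd (pd f i) j x ^ 2)
          (fun j _ => hn i j) (Finset.mem_univ j)
    _ ≤ _ := Finset.single_le_sum (f := fun i => ∑ j, ∫ x, pd (pd f i) j x ^ 2)
          (fun i _ => Finset.sum_nonneg fun j _ => hn i j) (Finset.mem_univ i)

/-- The `L²` norm as a real number. -/
def N2 (f : E3 → ℝ) : ℝ := Real.sqrt (∫ x, f x ^ 2)

lemma N2_nonneg (f : E3 → ℝ) : 0 ≤ N2 f := Real.sqrt_nonneg _

lemma N2_sq (f : E3 → ℝ) : N2 f ^ 2 = ∫ x, f x ^ 2 :=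
  Real.sq_sqrt (integral_nonneg fun x => sq_nonneg _)

lemma N2_hess {f : E3 → ℝ} (hf : Tst f) (i j : Fin 3) : N2 (pd (pd f i) j) ≤ N2 (lap f) :=
  Real.sqrt_le_sqrt (hess_le hf i j)

lemma int_abs_mul_le {f g : E3 → ℝ} (hf : MemLp f 2 volume) (hg : MemLp g 2 volume) :
    ∫ x, |f x| * |g x| ≤ N2 f * N2 g := by
  have h := integral_mul_norm_le_Lp_mul_Lq (μ := (volume : Measure E3)) (f := f) (g := g)
    Real.HolderConjugate.two_two (by simpa using hf) (by simpa using hg)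
  simpa [N2, Real.sqrt_eq_rpow] using h

lemma abs_int_mul_le {f g : E3 → ℝ} (hf : MemLp f 2 volume) (hg : MemLp g 2 volume) :
    |∫ x, f x * g x| ≤ N2 f * N2 g := by
  refine le_trans (abs_integral_le_integral_abs) ?_
  simp only [abs_mul]
  exact int_abs_mul_le hf hg

lemma N2_eq_toReal {f : E3 → ℝ} (hf : MemLp f 2 volume) :
    N2 f = (eLpNorm f 2 volume).toReal := by
  rw [MemLp.eLpNorm_eq_integral_rpow_norm (by simp) (by simp) hf]
  rw [ENNReal.toReal_ofReal (by positivity)]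
  simp [N2, Real.sqrt_eq_rpow]

lemma eLpNorm_eq_N2 {f : E3 → ℝ} (hf : MemLp f 2 volume) :
    eLpNorm f 2 volume = ENNReal.ofReal (N2 f) := by
  rw [N2_eq_toReal hf, ENNReal.ofReal_toReal hf.2.ne]

open scoped Convolution

/-- Mollification. -/
def mol (φ : ContDiffBump (0 : E3)) (f : E3 → ℝ) : E3 → ℝ :=
  (φ.normed volume) ⋆[ContinuousLinearMap.lsmul ℝ ℝ, volume] f

lemma mol_apply (φ : ContDiffBump (0 : E3)) (f : E3 → ℝ) (x : E3) :
    mol φ f x = ∫ t, φ.normed volume t * f (x - t) := by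
  simp [mol, convolution_def]

lemma normed_locInt (φ : ContDiffBump (0 : E3)) :
    LocallyIntegrable (φ.normed (volume : Measure E3)) volume :=
  φ.continuous_normed.locallyIntegrable

lemma mol_integrand {φ : ContDiffBump (0 : E3)} {f : E3 → ℝ} (hf : LocallyIntegrable f volume)
    (x : E3) : Integrable (fun t => φ.normed volume t * f (x - t)) volume := by
  have := (φ.hasCompactSupport_normed (μ := volume)).convolutionExists_left
    (μ := (volume : Measure E3)) (ContinuousLinearMap.lsmul ℝ ℝ) φ.continuous_normed hf x
  simpa [ConvolutionExistsAt] using this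

lemma mol_smooth (φ : ContDiffBump (0 : E3)) {f : E3 → ℝ} (hf : LocallyIntegrable f volume) :
    Smooth (mol φ f) :=
  φ.hasCompactSupport_normed.contDiff_convolution_left _ φ.contDiff_normed hf

lemma Tst.mol {f : E3 → ℝ} (hf : Tst f) (φ : ContDiffBump (0 : E3)) : Tst (mol φ f) := by
  refine Tst.mk' (mol_smooth φ hf.1.continuous.locallyIntegrable) ?_
  exact φ.hasCompactSupport_normed.convolution _ hf.2.1

lemma pd_mol {f : E3 → ℝ} (hf : Tst f) (φ : ContDiffBump (0 : E3)) (i : Fin 3) :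
    pd (mol φ f) i = mol φ (pd f i) := by
  funext x
  have h := hf.2.1.hasFDerivAt_convolution_right (ContinuousLinearMap.lsmul ℝ ℝ)
    (normed_locInt φ) (hf.1.of_le (by exact_mod_cast le_top)) x
  unfold pd mol
  rw [h.fderiv]
  apply convolution_precompR_apply
  · exact normed_locInt φ
  · exact hf.2.1.fderiv (𝕜 := ℝ)
  · exact hf.1.continuous_fderiv (by simp)

lemma mol_continuous (φ : ContDiffBump (0 : E3)) {f : E3 → ℝ} (hf : LocallyIntegrable f volume) :
    Continuous (mol φ f) := (mol_smooth φ hf).continuous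

lemma mol_sum (φ : ContDiffBump (0 : E3)) {f : Fin 3 → E3 → ℝ}
    (hf : ∀ i, LocallyIntegrable (f i) volume) (x : E3) :
    mol φ (fun y => ∑ i, f i y) x = ∑ i, mol φ (f i) x := by
  simp only [mol_apply, Finset.mul_sum]
  rw [integral_finsetSum _ (fun i _ => mol_integrand (hf i) x)]

lemma lap_mol {f : E3 → ℝ} (hf : Tst f) (φ : ContDiffBump (0 : E3)) :
    lap (mol φ f) = mol φ (lap f) := by
  funext x
  unfold lap
  rw [mol_sum φ (fun i => ((hf.pd i).pd i).1.continuous.locallyIntegrable)]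
  refine Finset.sum_congr rfl fun i _ => ?_
  rw [pd_mol hf, pd_mol (hf.pd i)]

lemma mol_abs_le (φ : ContDiffBump (0 : E3)) (f : E3 → ℝ) (x : E3) :
    |mol φ f x| ≤ mol φ (fun y => |f y|) x := by
  simp only [mol_apply]
  refine le_trans abs_integral_le_integral_abs (le_of_eq ?_)
  congr 1; funext t
  rw [abs_mul, abs_of_nonneg (φ.nonneg_normed t)]

lemma mol_nonneg (φ : ContDiffBump (0 : E3)) {f : E3 → ℝ} (hf : ∀ᵐ x, 0 ≤ f x) (x : E3) :
    0 ≤ mol φ f x := by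
  rw [mol_apply]
  refine integral_nonneg_of_ae ?_
  have : ∀ᵐ t, 0 ≤ f (x - t) :=
    (quasiMeasurePreserving_sub_left volume x).ae hf
  filter_upwards [this] with t ht
  exact mul_nonneg (φ.nonneg_normed t) ht

lemma mol_integrable (φ : ContDiffBump (0 : E3)) {f : E3 → ℝ} (hf : Integrable f volume) :
    Integrable (mol φ f) volume :=
  φ.integrable_normed.integrable_convolution _ hf

lemma integral_mol (φ : ContDiffBump (0 : E3)) {f : E3 → ℝ} (hf : Integrable f volume) :
    ∫ x, mol φ f x = ∫ x, f x := by
  unfold mol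
  rw [integral_convolution _ φ.integrable_normed hf, φ.integral_normed]
  simp

lemma mol_sq_le (φ : ContDiffBump (0 : E3)) {h : E3 → ℝ} (hl : LocallyIntegrable h volume)
    (hh : LocallyIntegrable (fun x => h x ^ 2) volume) (x : E3) :
    mol φ h x ^ 2 ≤ mol φ (fun y => h y ^ 2) x := by
  set m := mol φ h x with hm
  have i1 := mol_integrand (φ := φ) hl x
  have i2 := mol_integrand (φ := φ) hh x
  have i0 : Integrable (φ.normed (volume : Measure E3)) volume := φ.integrable_normed
  have h0 : 0 ≤ ∫ t, φ.normed volume t * (h (x - t) - m) ^ 2 :=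
    integral_nonneg fun t => mul_nonneg (φ.nonneg_normed t) (sq_nonneg _)
  have e : ∫ t, φ.normed volume t * (h (x - t) - m) ^ 2
      = mol φ (fun y => h y ^ 2) x - 2 * m * m + m ^ 2 * 1 := by
    have : (fun t => φ.normed volume t * (h (x - t) - m) ^ 2) = fun t =>
        (φ.normed volume t * h (x - t) ^ 2 - (2 * m) * (φ.normed volume t * h (x - t)))
          + m ^ 2 * φ.normed volume t := by
      funext t; ring
    have i3 : Integrable (fun t => φ.normed volume t * h (x - t) ^ 2
        - (2 * m) * (φ.normed volume t * h (x - t))) volume := i2.sub (i1.const_mul _)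
    rw [this, integral_add i3 (i0.const_mul _),
      integral_sub i2 (i1.const_mul _), integral_const_mul, integral_const_mul,
      φ.integral_normed, ← mol_apply φ h x, mol_apply φ (fun y => h y ^ 2) x]
  rw [e] at h0
  nlinarith

lemma mol_memLp (φ : ContDiffBump (0 : E3)) {h : E3 → ℝ} (hh : MemLp h 2 volume) :
    MemLp (mol φ h) 2 volume ∧ N2 (mol φ h) ≤ N2 h := by
  have hl : LocallyIntegrable h volume := hh.locallyIntegrable (by norm_num)
  have hi : Integrable (fun x => h x ^ 2) volume := hh.integrable_sq
  have hc := mol_continuous φ hl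
  have hI := mol_integrable φ hi
  have hle := mol_sq_le φ hl hi.locallyIntegrable
  have hsq : Integrable (fun x => mol φ h x ^ 2) volume := by
    refine hI.mono' (by fun_prop) (Eventually.of_forall fun x => ?_)
    rw [Real.norm_of_nonneg (sq_nonneg _)]
    exact hle x
  refine ⟨(memLp_two_iff_integrable_sq hc.aestronglyMeasurable).2 hsq, ?_⟩
  apply Real.sqrt_le_sqrt
  rw [← integral_mol φ hi]
  exact integral_mono hsq hI hle

lemma mol_memLp_of_integrable (φ : ContDiffBump (0 : E3)) {f : E3 → ℝ}
    (hf : Integrable f volume) : MemLp (mol φ f) 2 volume := by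
  have hc := mol_continuous φ hf.locallyIntegrable
  have hI := mol_integrable φ hf
  obtain ⟨B, hB⟩ := φ.hasCompactSupport_normed.exists_bound_of_continuous
    (φ.continuous_normed (μ := (volume : Measure E3)))
  have hbd : ∀ x, |mol φ f x| ≤ B * ∫ y, |f y| := by
    intro x
    rw [mol_apply]
    refine le_trans abs_integral_le_integral_abs ?_
    rw [← integral_sub_left_eq_self (fun y => |f y|) volume x, ← integral_const_mul]
    refine integral_mono_of_nonneg (Eventually.of_forall fun t => abs_nonneg _)
      ((hf.abs.comp_sub_left x).const_mul _) (Eventually.of_forall fun t => ?_)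
    simp only [abs_mul]
    exact mul_le_mul_of_nonneg_right (hB t) (abs_nonneg _)
  refine (memLp_two_iff_integrable_sq hc.aestronglyMeasurable).2 ?_
  refine (hI.abs.const_mul (B * ∫ y, |f y|)).mono' (by fun_prop)
    (Eventually.of_forall fun x => ?_)
  rw [Real.norm_of_nonneg (sq_nonneg _), ← sq_abs, pow_two]
  exact mul_le_mul_of_nonneg_right (hbd x) (abs_nonneg _)

lemma mol_adj (φ : ContDiffBump (0 : E3)) {h g : E3 → ℝ} (hh : LocallyIntegrable h volume)
    (hg : Continuous g) (hgc : HasCompactSupport g) :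
    ∫ x, mol φ h x * g x = ∫ x, h x * mol φ g x := by
  set w := φ.normed (volume : Measure E3) with hw
  have hwc : Continuous w := φ.continuous_normed
  set K : Set E3 := (fun q : E3 × E3 => q.1 - q.2) '' (tsupport g ×ˢ tsupport w) with hK
  have hKc : IsCompact K :=
    (hgc.isCompact.prod (φ.hasCompactSupport_normed (μ := volume)).isCompact).image
      (continuous_fst.sub continuous_snd)
  have hKi : Integrable (K.indicator h) volume :=
    (integrable_indicator_iff hKc.measurableSet).2 (hh.integrableOn_isCompact hKc)
  obtain ⟨B, hB⟩ := hgc.exists_bound_of_continuous hg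
  have hint : Integrable (fun q : E3 × E3 => w q.2 * h (q.1 - q.2) * g q.1)
      (volume.prod volume) := by
    have h1 := Integrable.convolution_integrand (ContinuousLinearMap.lsmul ℝ ℝ)
      (φ.integrable_normed (μ := (volume : Measure E3))) hKi
    have h2 := h1.bdd_mul (c := B) (f := fun q : E3 × E3 => g q.1)
      (hg.comp continuous_fst).aestronglyMeasurable (Eventually.of_forall fun q => hB q.1)
    refine h2.congr (Eventually.of_forall fun q => ?_)
    simp only [ContinuousLinearMap.lsmul_apply, smul_eq_mul]
    by_cases hq1 : q.1 ∈ tsupport g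
    · by_cases hq2 : q.2 ∈ tsupport w
      · have : q.1 - q.2 ∈ K := ⟨q, ⟨hq1, hq2⟩, rfl⟩
        rw [indicator_of_mem this]; ring
      · have := image_eq_zero_of_notMem_tsupport hq2
        rw [this, show φ.normed volume q.2 = 0 from this]; ring
    · rw [image_eq_zero_of_notMem_tsupport hq1]; ring
  calc ∫ x, mol φ h x * g x = ∫ x, ∫ t, w t * h (x - t) * g x := by
        congr 1; funext x; rw [mol_apply, ← integral_mul_const]
    _ = ∫ t, ∫ x, w t * h (x - t) * g x := integral_integral_swap hint
    _ = ∫ t, ∫ x, w t * h x * g (x + t) := by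
        congr 1; funext t
        rw [← integral_sub_right_eq_self (fun x => w t * h x * g (x + t)) t]
        simp
    _ = ∫ t, ∫ x, w t * h x * g (x - t) := by
        rw [← integral_neg_eq_self]
        congr 1; funext t
        rw [show w (-t) = w t from φ.normed_neg t]
        simp [sub_eq_add_neg]
    _ = ∫ x, ∫ t, w t * h x * g (x - t) := by
        refine integral_integral_swap ?_
        set K' : Set E3 := (fun q : E3 × E3 => q.1 + q.2) '' (tsupport g ×ˢ tsupport w) with hK'
        have hKc' : IsCompact K' :=
          (hgc.isCompact.prod (φ.hasCompactSupport_normed (μ := volume)).isCompact).image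
            (continuous_fst.add continuous_snd)
        have hKi' : Integrable (K'.indicator h) volume :=
          (integrable_indicator_iff hKc'.measurableSet).2 (hh.integrableOn_isCompact hKc')
        have h1 := (φ.integrable_normed (μ := (volume : Measure E3))).mul_prod hKi'
        have h2 := h1.bdd_mul (c := B) (f := fun q : E3 × E3 => g (q.2 - q.1))
          (hg.comp (continuous_snd.sub continuous_fst)).aestronglyMeasurable
          (Eventually.of_forall fun q => hB _)
        refine h2.congr (Eventually.of_forall fun q => ?_)
        simp only [Function.uncurry]
        by_cases hq1 : q.2 - q.1 ∈ tsupport g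
        · by_cases hq2 : q.1 ∈ tsupport w
          · have : q.2 ∈ K' := ⟨(q.2 - q.1, q.1), ⟨hq1, hq2⟩, by simp⟩
            rw [indicator_of_mem this]; ring
          · have := image_eq_zero_of_notMem_tsupport hq2
            rw [this, show φ.normed volume q.1 = 0 from this]; ring
        · rw [image_eq_zero_of_notMem_tsupport hq1]; ring
    _ = ∫ x, h x * mol φ g x := by
        congr 1; funext x
        rw [mol_apply, ← integral_const_mul]
        congr 1; funext t; ring

/-- A sequence of bump functions shrinking to the origin. -/
def bmp (n : ℕ) : ContDiffBump (0 : E3) where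
  rIn := 1 / ((n : ℝ) + 1)
  rOut := 2 / ((n : ℝ) + 1)
  rIn_pos := by positivity
  rIn_lt_rOut := by
    apply div_lt_div_of_pos_right (by norm_num) (by positivity)

lemma mol_tendsto {f : E3 → ℝ} (hf : LocallyIntegrable f volume) :
    ∀ᵐ x, Tendsto (fun n => mol (bmp n) f x) atTop (𝓝 (f x)) := by
  apply ContDiffBump.ae_convolution_tendsto_right_of_locallyIntegrable (K := 2) _ _ hf
  · have := (tendsto_one_div_add_atTop_nhds_zero_nat (𝕜 := ℝ)).const_mul 2
    simpa [bmp, mul_div_assoc, div_eq_mul_inv] using this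
  · refine Eventually.of_forall fun n => le_of_eq ?_
    simp [bmp, div_eq_mul_inv]

lemma caccioppoli {H χ : E3 → ℝ} (hH : Smooth H) (hχ : Tst χ)
    (hz : ∀ ψ, Tst ψ → ∫ x, H x * lap ψ x = 0) :
    ∑ i, ∫ x, χ x * pd H i x ^ 2 = (1 / 2) * ∫ x, H x ^ 2 * lap χ x := by
  have hψ : Tst (fun x => χ x * H x) := hχ.mul_left hH
  have e1 := hz _ hψ
  have hi1 : ∀ i, Integrable (fun x => H x * pd (pd (fun x => χ x * H x) i) i x) volume :=
    fun i => ((hψ.pd i).pd i).integrable_mul' hH.continuous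
  have s1 : ∫ x, H x * lap (fun x => χ x * H x) x
      = ∑ i, ∫ x, H x * pd (pd (fun x => χ x * H x) i) i x := by
    simp only [lap, Finset.mul_sum]
    exact integral_finsetSum _ fun i _ => hi1 i
  have hH2 : Smooth (fun x => H x ^ 2) := ContDiff.pow hH 2
  have hi2 : ∀ i, Integrable (fun x => H x ^ 2 * pd (pd χ i) i x) volume :=
    fun i => ((hχ.pd i).pd i).integrable_mul' hH2.continuous
  have s2 : ∫ x, H x ^ 2 * lap χ x = ∑ i, ∫ x, H x ^ 2 * pd (pd χ i) i x := by
    simp only [lap, Finset.mul_sum]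
    exact integral_finsetSum _ fun i _ => hi2 i
  have key : ∀ i, ∫ x, χ x * pd H i x ^ 2
      = (1 / 2) * (∫ x, H x ^ 2 * pd (pd χ i) i x)
        - ∫ x, H x * pd (pd (fun x => χ x * H x) i) i x := by
    intro i
    rw [ibp hH (hψ.pd i) i, ibp hH2 (hχ.pd i) i]
    have ia : Integrable (fun x => χ x * pd H i x ^ 2) volume :=
      hχ.integrable_mul ((Smooth.pd hH i).continuous.pow 2)
    have ib : Integrable (fun x => pd χ i x * (H x * pd H i x)) volume :=
      (hχ.pd i).integrable_mul (hH.continuous.mul (Smooth.pd hH i).continuous)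
    have ea : ∫ x, pd H i x * pd (fun x => χ x * H x) i x
        = (∫ x, χ x * pd H i x ^ 2) + ∫ x, pd χ i x * (H x * pd H i x) := by
      rw [← integral_add ia ib]
      congr 1; funext x; rw [pd_mul hχ.1 hH]; ring
    have eb : ∫ x, pd (fun x => H x ^ 2) i x * pd χ i x
        = 2 * ∫ x, pd χ i x * (H x * pd H i x) := by
      rw [← integral_const_mul]
      congr 1; funext x
      have : (fun x => H x ^ 2) = fun x => H x * H x := by funext y; ring
      rw [this, pd_mul hH hH]; ring
    rw [ea, eb]; ring
  simp_rw [key]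
  rw [Finset.sum_sub_distrib, ← s1, e1, s2, Finset.mul_sum, sub_zero]

/-- The basic cutoff function. -/
def bb : ContDiffBump (0 : E3) where
  rIn := 1
  rOut := 2
  rIn_pos := by norm_num
  rIn_lt_rOut := by norm_num

/-- The rescaled cutoff function. -/
def cut (c : ℝ) : E3 → ℝ := fun x => bb (c • x)

lemma cut_tst {c : ℝ} (hc : c ≠ 0) : Tst (cut c) := by
  refine Tst.mk' (bb.contDiff.comp (contDiff_const_smul c)) ?_
  exact bb.hasCompactSupport.comp_homeomorph (Homeomorph.smulOfNeZero c hc)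

lemma bb_tst : Tst (bb : E3 → ℝ) := Tst.mk' bb.contDiff bb.hasCompactSupport

lemma pd_scale {f : E3 → ℝ} (c : ℝ) (i : Fin 3) :
    pd (fun x => f (c • x)) i = fun x => c * pd f i (c • x) := by
  funext x
  unfold pd
  rw [fderiv_comp_smul]
  simp

lemma pd_const_mul {f : E3 → ℝ} (hf : Smooth f) (c : ℝ) (i : Fin 3) :
    pd (fun x => c * f x) i = fun x => c * pd f i x := by
  funext x
  unfold pd
  rw [fderiv_const_mul hf.differentiable'.differentiableAt]
  simp

lemma lap_cut (c : ℝ) (x : E3) : lap (cut c) x = c ^ 2 * lap bb (c • x) := by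
  unfold lap cut
  rw [Finset.mul_sum]
  refine Finset.sum_congr rfl fun i _ => ?_
  have hs : Smooth (fun x => pd bb i (c • x)) :=
    (bb_tst.pd i).1.comp (contDiff_const_smul c)
  rw [pd_scale, pd_const_mul hs, pd_scale]
  ring

lemma liouville_smooth {H : E3 → ℝ} (hH : Smooth H) (h2 : MemLp H 2 volume)
    (hz : ∀ ψ, Tst ψ → ∫ x, H x * lap ψ x = 0) : H = 0 := by
  obtain ⟨B, hB⟩ := bb_tst.lap.2.1.exists_bound_of_continuous bb_tst.lap.1.continuous
  have hB0 : 0 ≤ B := (norm_nonneg _).trans (hB 0)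
  have hi : Integrable (fun x => H x ^ 2) volume := h2.integrable_sq
  have hbd : ∀ c : ℝ, c ≠ 0 → ∀ i, ∫ x, cut c x * pd H i x ^ 2
      ≤ c ^ 2 * (B * ∫ x, H x ^ 2) := by
    intro c hc i
    have h1 : ∫ x, cut c x * pd H i x ^ 2 ≤ ∑ i, ∫ x, cut c x * pd H i x ^ 2 :=
      Finset.single_le_sum (f := fun i => ∫ x, cut c x * pd H i x ^ 2)
        (fun j _ => integral_nonneg fun x => mul_nonneg bb.nonneg (sq_nonneg _))
        (Finset.mem_univ i)
    rw [caccioppoli hH (cut_tst hc) hz] at h1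
    have h3 : ∫ x, H x ^ 2 * lap (cut c) x ≤ ∫ x, (c ^ 2 * B) * H x ^ 2 := by
      refine integral_mono ((cut_tst hc).lap.integrable_mul' (hH.continuous.pow 2))
        (hi.const_mul _) fun x => ?_
      simp only [lap_cut]
      have := (le_abs_self _).trans (hB (c • x))
      nlinarith [mul_le_mul_of_nonneg_left this (mul_nonneg (sq_nonneg (H x)) (sq_nonneg c))]
    rw [integral_const_mul] at h3
    have h4 : 0 ≤ ∫ x, H x ^ 2 := integral_nonneg fun x => sq_nonneg _
    have : 0 ≤ c ^ 2 * (B * ∫ x, H x ^ 2) := by positivity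
    linarith
  have hpd : ∀ i, pd H i = 0 := by
    intro i
    have hc : Continuous (pd H i) := (Smooth.pd hH i).continuous
    have hball : ∀ n : ℕ, ∫ x in ball (0 : E3) ((n : ℝ) + 1), pd H i x ^ 2 = 0 := by
      intro n
      refine le_antisymm ?_ (integral_nonneg fun x => sq_nonneg _)
      have hle : ∀ m : ℕ, n ≤ m → ∫ x in ball (0 : E3) ((n : ℝ) + 1), pd H i x ^ 2
          ≤ (1 / ((m : ℝ) + 1)) * (1 / ((m : ℝ) + 1)) * (B * ∫ x, H x ^ 2) := by
        intro m hm
        have hmp : 0 < 1 / ((m : ℝ) + 1) := by positivity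
        refine le_trans ?_ ((hbd (1 / ((m : ℝ) + 1)) hmp.ne' i).trans (by rw [pow_two]))
        rw [← integral_indicator measurableSet_ball]
        refine integral_mono_of_nonneg
          (Eventually.of_forall fun x => indicator_nonneg (fun _ _ => sq_nonneg _) _)
          ((cut_tst hmp.ne').integrable_mul (hc.pow 2)) (Eventually.of_forall fun x => ?_)
        by_cases hx : x ∈ ball (0 : E3) ((n : ℝ) + 1)
        · simp only [indicator_of_mem hx]
          have : cut (1 / ((m : ℝ) + 1)) x = 1 := by
            apply bb.one_of_mem_closedBall
            rw [mem_closedBall_zero_iff, norm_smul, Real.norm_of_nonneg hmp.le]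
            rw [mem_ball_zero_iff] at hx
            have hnm : (n : ℝ) ≤ m := by exact_mod_cast hm
            show 1 / ((m : ℝ) + 1) * ‖x‖ ≤ 1
            rw [one_div, inv_mul_le_iff₀ (by positivity)]
            linarith
          rw [this, one_mul]
        · simp only [indicator_of_notMem hx]
          exact mul_nonneg bb.nonneg (sq_nonneg _)
      have ht : Tendsto (fun m : ℕ => (1 / ((m : ℝ) + 1)) * (1 / ((m : ℝ) + 1))
          * (B * ∫ x, H x ^ 2)) atTop (𝓝 0) := by
        have t := tendsto_one_div_add_atTop_nhds_zero_nat (𝕜 := ℝ)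
        simpa using (t.mul t).mul_const (B * ∫ x, H x ^ 2)
      exact ge_of_tendsto ht (eventually_atTop.2 ⟨n, hle⟩)
    funext x
    by_contra hne
    obtain ⟨n, hn⟩ := exists_nat_gt ‖x‖
    have hx : x ∈ ball (0 : E3) ((n : ℝ) + 1) := by
      rw [mem_ball_zero_iff]; linarith
    have hpos : 0 < ∫ x in ball (0 : E3) ((n : ℝ) + 1), pd H i x ^ 2 := by
      rw [setIntegral_pos_iff_support_of_nonneg_ae
        (Eventually.of_forall fun x => sq_nonneg _)]
      · apply IsOpen.measure_pos
        · exact ((hc.pow 2).isOpen_support).inter isOpen_ball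
        · exact ⟨x, by simpa using hne, hx⟩
      · exact ((hc.pow 2).continuousOn.integrableOn_compact
          (isCompact_closedBall (0 : E3) ((n : ℝ) + 1))).mono_set ball_subset_closedBall
    exact hpos.ne' (hball n)
  have hfd : ∀ x, fderiv ℝ H x = 0 := by
    intro x
    apply ContinuousLinearMap.coe_injective
    refine (EuclideanSpace.basisFun (Fin 3) ℝ).toBasis.ext fun i => ?_
    have := congrFun (hpd i) x
    simpa [pd] using this
  have hconst : ∀ x, H x = H 0 := fun x =>
    is_const_of_fderiv_eq_zero hH.differentiable' hfd x 0
  have e : H = fun _ => H 0 := funext hconst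
  rw [e, memLp_const_iff (by norm_num) (by norm_num)] at h2
  rcases h2 with h2 | h2
  · rw [e, h2]; rfl
  · simp at h2

lemma liouville {h : E3 → ℝ} (h2 : MemLp h 2 volume)
    (hz : ∀ ψ, Tst ψ → ∫ x, h x * lap ψ x = 0) : h =ᵐ[volume] 0 := by
  have hl : LocallyIntegrable h volume := h2.locallyIntegrable (by norm_num)
  have hm : ∀ n, mol (bmp n) h = 0 := by
    intro n
    refine liouville_smooth (mol_smooth _ hl) (mol_memLp _ h2).1 fun ψ hψ => ?_
    rw [mol_adj _ hl hψ.lap.1.continuous hψ.lap.2.1, ← lap_mol hψ]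
    exact hz _ (hψ.mol _)
  filter_upwards [mol_tendsto hl] with x hx
  simp only [hm, Pi.zero_apply] at hx
  exact tendsto_nhds_unique hx tendsto_const_nhds

lemma Tst.add {f g : E3 → ℝ} (hf : Tst f) (hg : Tst g) : Tst (fun x => f x + g x) :=
  Tst.mk' (hf.1.add hg.1) (hf.2.1.add hg.2.1)

lemma Tst.const_mul {f : E3 → ℝ} (hf : Tst f) (c : ℝ) : Tst (fun x => c * f x) :=
  Tst.mk' (contDiff_const.mul hf.1) hf.2.1.mul_left

lemma pd_add {f g : E3 → ℝ} (hf : Smooth f) (hg : Smooth g) (i : Fin 3) :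
    pd (fun x => f x + g x) i = fun x => pd f i x + pd g i x := by
  funext x
  unfold pd
  rw [fderiv_fun_add hf.differentiable'.differentiableAt hg.differentiable'.differentiableAt]
  simp

lemma lap_add {f g : E3 → ℝ} (hf : Tst f) (hg : Tst g) (x : E3) :
    lap (fun x => f x + g x) x = lap f x + lap g x := by
  unfold lap
  rw [← Finset.sum_add_distrib]
  refine Finset.sum_congr rfl fun i _ => ?_
  rw [pd_add hf.1 hg.1, pd_add (hf.pd i).1 (hg.pd i).1]

lemma lap_const_mul {f : E3 → ℝ} (hf : Tst f) (c : ℝ) (x : E3) :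
    lap (fun x => c * f x) x = c * lap f x := by
  unfold lap
  rw [Finset.mul_sum]
  refine Finset.sum_congr rfl fun i _ => ?_
  rw [pd_const_mul hf.1, pd_const_mul (hf.pd i).1]

/-- The subspace of Laplacians of test functions. -/
def lapSub : Submodule ℝ (Lp ℝ 2 (volume : Measure E3)) where
  carrier := {v | ∃ ψ, Tst ψ ∧ v =ᵐ[volume] lap ψ}
  add_mem' := by
    rintro v w ⟨ψ, hψ, hv⟩ ⟨θ, hθ, hw⟩
    refine ⟨_, hψ.add hθ, ?_⟩
    filter_upwards [Lp.coeFn_add v w, hv, hw] with x h1 h2 h3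
    rw [h1, Pi.add_apply, h2, h3, lap_add hψ hθ]
  zero_mem' := by
    refine ⟨fun _ => 0, Tst.mk' contDiff_const HasCompactSupport.zero, ?_⟩
    filter_upwards [Lp.coeFn_zero ℝ 2 (volume : Measure E3)] with x h1
    rw [h1]
    have hz : ∀ i, pd (fun _ => (0 : ℝ)) i = fun _ => 0 := fun i => by funext y; simp [pd]
    simp [lap, hz]
  smul_mem' := by
    rintro c v ⟨ψ, hψ, hv⟩
    refine ⟨_, hψ.const_mul c, ?_⟩
    filter_upwards [Lp.coeFn_smul c v, hv] with x h1 h2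
    rw [h1, Pi.smul_apply, h2, lap_const_mul hψ, smul_eq_mul]

lemma inner_eq (v w : Lp ℝ 2 (volume : Measure E3)) {f g : E3 → ℝ} (hv : v =ᵐ[volume] f)
    (hw : w =ᵐ[volume] g) : inner ℝ v w = ∫ x, f x * g x := by
  rw [L2.inner_def]
  refine integral_congr_ae ?_
  filter_upwards [hv, hw] with x h1 h2
  rw [h1, h2]
  simp [mul_comm]

lemma lapSub_dense : lapSub.topologicalClosure = ⊤ := by
  rw [Submodule.topologicalClosure_eq_top_iff, Submodule.eq_bot_iff]
  intro v hv
  rw [Submodule.mem_orthogonal'] at hv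
  have : (v : E3 → ℝ) =ᵐ[volume] 0 := by
    refine liouville (Lp.memLp v) fun ψ hψ => ?_
    have h1 := hv ((hψ.lap.memLp 2).toLp _) ⟨ψ, hψ, MemLp.coeFn_toLp _⟩
    rwa [inner_eq v _ (EventuallyEq.refl _ _) (MemLp.coeFn_toLp _)] at h1
  exact (Lp.eq_zero_iff_ae_eq_zero).2 this

lemma N2_le_of_dual {f : E3 → ℝ} (hf : MemLp f 2 volume) {A : ℝ} (hA : 0 ≤ A)
    (h : ∀ ψ, Tst ψ → |∫ x, f x * lap ψ x| ≤ A * N2 (lap ψ)) : N2 f ≤ A := by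
  set F := hf.toLp f with hF
  have hclosed : IsClosed {v : Lp ℝ 2 (volume : Measure E3) | |inner ℝ F v| ≤ A * ‖v‖} :=
    isClosed_le (by fun_prop) (by fun_prop)
  have hsub : (lapSub : Set (Lp ℝ 2 (volume : Measure E3)))
      ⊆ {v | |inner ℝ F v| ≤ A * ‖v‖} := by
    rintro v ⟨ψ, hψ, hv⟩
    have e : ‖v‖ = N2 (lap ψ) := by
      rw [N2_eq_toReal (hψ.lap.memLp 2), Lp.norm_def, eLpNorm_congr_ae hv]
    change |inner ℝ F v| ≤ A * ‖v‖
    rw [inner_eq F v (MemLp.coeFn_toLp hf) hv, e]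
    exact h ψ hψ
  have hall := closure_minimal hsub hclosed
  have hmem : F ∈ closure (lapSub : Set (Lp ℝ 2 (volume : Measure E3))) := by
    rw [← Submodule.topologicalClosure_coe, lapSub_dense]; trivial
  have hFF : |inner ℝ F F| ≤ A * ‖F‖ := hall hmem
  have eF : ‖F‖ = N2 f := by
    rw [hF, Lp.norm_toLp, N2_eq_toReal hf]
  rw [real_inner_self_eq_norm_sq, eF, abs_of_nonneg (sq_nonneg _), pow_two] at hFF
  rcases (N2_nonneg f).eq_or_lt with h0 | h0
  · rw [← h0]; exact hA
  · exact le_of_mul_le_mul_right hFF h0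

lemma memLp_two_of_dual {p : E3 → ℝ} (hp : Integrable p volume) (hp0 : ∀ᵐ x, 0 ≤ p x)
    {κ K : ℝ} (hκ : 0 ≤ κ) (hκ' : 9 * κ ≤ 1 / 2) (hK : 0 ≤ K)
    (h : ∀ ψ, Tst ψ → |∫ x, p x * lap ψ x|
      ≤ κ * (∑ i, ∑ j, ∫ x, p x * |pd (pd ψ i) j x|) + K * N2 (lap ψ)) :
    MemLp p 2 volume := by
  have hl := hp.locallyIntegrable
  have hmain : ∀ n, N2 (mol (bmp n) p) ≤ 2 * K := by
    intro n
    set φ := bmp n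
    have hf2 : MemLp (mol φ p) 2 volume := mol_memLp_of_integrable φ hp
    have key : N2 (mol φ p) ≤ 9 * κ * N2 (mol φ p) + K := by
      refine N2_le_of_dual hf2
        (add_nonneg (mul_nonneg (by positivity) (N2_nonneg _)) hK) fun ψ hψ => ?_
      rw [mol_adj φ hl hψ.lap.1.continuous hψ.lap.2.1, ← lap_mol hψ]
      refine (h _ (hψ.mol φ)).trans ?_
      have hk : K * N2 (lap (mol φ ψ)) ≤ K * N2 (lap ψ) := by
        rw [lap_mol hψ]
        exact mul_le_mul_of_nonneg_left (mol_memLp φ (hψ.lap.memLp 2)).2 hK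
      have hij : ∀ i j, ∫ x, p x * |pd (pd (mol φ ψ) i) j x| ≤ N2 (mol φ p) * N2 (lap ψ) := by
        intro i j
        have hd := (hψ.pd i).pd j
        have hdc : Continuous (fun y => |pd (pd ψ i) j y|) := hd.1.continuous.abs
        have hds : HasCompactSupport (fun y => |pd (pd ψ i) j y|) :=
          hd.2.1.comp_left (g := fun t : ℝ => |t|) abs_zero
        have hmc : Continuous (mol φ (fun y => |pd (pd ψ i) j y|)) :=
          mol_continuous φ hdc.locallyIntegrable
        have hms : HasCompactSupport (mol φ (fun y => |pd (pd ψ i) j y|)) :=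
          φ.hasCompactSupport_normed.convolution _ hds
        rw [pd_mol hψ, pd_mol (hψ.pd i)]
        calc ∫ x, p x * |mol φ (pd (pd ψ i) j) x|
            ≤ ∫ x, p x * mol φ (fun y => |pd (pd ψ i) j y|) x := by
              refine integral_mono_of_nonneg ?_ ?_ ?_
              · filter_upwards [hp0] with x hx using mul_nonneg hx (abs_nonneg _)
              · obtain ⟨B, hB⟩ := hms.exists_bound_of_continuous hmc
                exact hp.mul_bdd (c := B) hmc.aestronglyMeasurable
                  (Eventually.of_forall hB)
              · filter_upwards [hp0] with x hx
                exact mul_le_mul_of_nonneg_left (mol_abs_le φ _ x) hx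
          _ = ∫ x, mol φ p x * |pd (pd ψ i) j x| := (mol_adj φ hl hdc hds).symm
          _ = ∫ x, |mol φ p x| * |pd (pd ψ i) j x| := by
              congr 1; funext x; rw [abs_of_nonneg (mol_nonneg φ hp0 x)]
          _ ≤ N2 (mol φ p) * N2 (pd (pd ψ i) j) := int_abs_mul_le hf2 (hd.memLp 2)
          _ ≤ N2 (mol φ p) * N2 (lap ψ) :=
              mul_le_mul_of_nonneg_left (N2_hess hψ i j) (N2_nonneg _)
      have hs : ∑ i, ∑ j, ∫ x, p x * |pd (pd (mol φ ψ) i) j x|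
          ≤ 9 * (N2 (mol φ p) * N2 (lap ψ)) := by
        refine (Finset.sum_le_sum fun i _ => Finset.sum_le_sum fun j _ => hij i j).trans ?_
        simp only [Finset.sum_const, Finset.card_univ, Fintype.card_fin, nsmul_eq_mul]
        apply le_of_eq; push_cast; ring
      have := mul_le_mul_of_nonneg_left hs hκ
      nlinarith
    nlinarith [N2_nonneg (mol φ p)]
  refine ⟨hp.1, ?_⟩
  have hlim := Lp.eLpNorm_lim_le_liminf_eLpNorm (p := 2) (μ := (volume : Measure E3))
    (f := fun n => mol (bmp n) p)
    (fun n => (mol_continuous (bmp n) hl).aestronglyMeasurable) p (mol_tendsto hl)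
  refine lt_of_le_of_lt hlim (lt_of_le_of_lt ?_ (ENNReal.ofReal_lt_top (r := 2 * K)))
  refine liminf_le_of_frequently_le' (Frequently.of_forall fun n => ?_)
  rw [eLpNorm_eq_N2 (mol_memLp_of_integrable (bmp n) hp)]
  exact ENNReal.ofReal_le_ofReal (hmain n)

lemma norm_clm_le (T : E3 →L[ℝ] ℝ) : ‖T‖ ≤ ∑ j, ‖T (EuclideanSpace.single j 1)‖ := by
  refine T.opNorm_le_bound (Finset.sum_nonneg fun _ _ => norm_nonneg _) fun x => ?_
  have hx : x = ∑ j, x j • EuclideanSpace.single j (1 : ℝ) := by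
    ext k
    simp [Finset.sum_apply, Pi.single_apply]
  have e : T x = ∑ j, x j * T (EuclideanSpace.single j 1) := by
    conv_lhs => rw [hx]
    simp [map_sum]
  rw [e, Finset.sum_mul]
  refine (norm_sum_le _ _).trans (Finset.sum_le_sum fun j _ => ?_)
  rw [norm_mul, mul_comm]
  exact mul_le_mul_of_nonneg_left (PiLp.norm_apply_le x j) (norm_nonneg _)

lemma sobolev : ∃ C : ℝ, 0 ≤ C ∧ ∀ ψ, Tst ψ → ∀ i,
    (∫ x, |pd ψ i x| ^ (6 : ℝ)) ^ (1 / (6 : ℝ)) ≤ C * N2 (lap ψ) := by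
  set C0 := SNormLESNormFDerivOfEqConst ℝ (volume : Measure E3) 2 with hC0
  refine ⟨C0 * 3, by positivity, fun ψ hψ i => ?_⟩
  have hi := hψ.pd i
  have h6 := hi.memLp 6
  have e6 : (∫ x, |pd ψ i x| ^ (6 : ℝ)) ^ (1 / (6 : ℝ)) = (eLpNorm (pd ψ i) 6 volume).toReal := by
    rw [MemLp.eLpNorm_eq_integral_rpow_norm (by simp) (by simp) h6]
    rw [ENNReal.toReal_ofReal (by positivity)]
    simp
  have hs := eLpNorm_le_eLpNorm_fderiv_of_eq (volume : Measure E3) (u := pd ψ i)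
    (hi.1.of_le (by exact_mod_cast le_top)) hi.2.1 (p := 2) (p' := 6) (by norm_num)
    (by simp) (by simp; norm_num)
  have hf : eLpNorm (fderiv ℝ (pd ψ i)) 2 volume ≤ ENNReal.ofReal (3 * N2 (lap ψ)) := by
    have h1 : eLpNorm (fderiv ℝ (pd ψ i)) 2 volume
        ≤ eLpNorm (fun x => ∑ j, ‖pd (pd ψ i) j x‖) 2 volume := by
      refine eLpNorm_mono_real fun x => ?_
      exact norm_clm_le _
    have h2 : eLpNorm (fun x => ∑ j, ‖pd (pd ψ i) j x‖) 2 volume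
        ≤ ∑ j, eLpNorm (fun x => ‖pd (pd ψ i) j x‖) 2 volume := by
      have := eLpNorm_sum_le (μ := (volume : Measure E3)) (p := 2) (s := Finset.univ)
        (f := fun j x => ‖pd (pd ψ i) j x‖)
        (fun j _ => (hi.pd j).1.continuous.norm.aestronglyMeasurable) (by norm_num)
      convert this using 2
      funext x; simp
    refine h1.trans (h2.trans ?_)
    have h3 : ∀ j, eLpNorm (fun x => ‖pd (pd ψ i) j x‖) 2 volume
        ≤ ENNReal.ofReal (N2 (lap ψ)) := by
      intro j
      rw [eLpNorm_norm, eLpNorm_eq_N2 ((hi.pd j).memLp 2)]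
      exact ENNReal.ofReal_le_ofReal (N2_hess hψ i j)
    refine (Finset.sum_le_sum fun j _ => h3 j).trans ?_
    simp [ENNReal.ofReal_mul]
  rw [e6]
  refine ENNReal.toReal_le_of_le_ofReal (by have := N2_nonneg (lap ψ); positivity) ?_
  refine le_trans hs ?_
  rw [mul_assoc, ENNReal.ofReal_mul (by positivity), ENNReal.ofReal_coe_nnreal]
  exact mul_le_mul' le_rfl hf

lemma young {γ r v : ℝ} (hγ1 : 3 ≤ γ) (hγ2 : γ < 6) (hr : 0 ≤ r) (hv : 0 ≤ v) :
    r * v ^ 2 ≤ (1 / 25) * r ^ γ + (r ^ (γ / 2) + 5 * v ^ 3) := by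
  have h1 : 0 ≤ r ^ γ := Real.rpow_nonneg hr _
  have h2 : 0 ≤ r ^ (γ / 2) := Real.rpow_nonneg hr _
  have h3 : 0 ≤ v ^ 3 := by positivity
  rcases le_or_gt 1 r with h | h
  · have h4 : r ^ 3 ≤ r ^ γ := by
      rw [← Real.rpow_natCast]
      exact Real.rpow_le_rpow_of_exponent_le h (by exact_mod_cast hγ1)
    rcases le_or_gt r (5 * v) with h5 | h5
    · nlinarith [mul_le_mul_of_nonneg_right h5 (sq_nonneg v)]
    · have h6 : v ^ 2 ≤ (1 / 25) * r ^ 2 := by nlinarith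
      nlinarith [mul_le_mul_of_nonneg_left h6 hr]
  · have h4 : r ^ 3 ≤ r ^ (γ / 2) := by
      rcases hr.eq_or_lt with h0 | h0
      · rw [← h0, Real.zero_rpow (by linarith)]; norm_num
      · rw [← Real.rpow_natCast]
        exact Real.rpow_le_rpow_of_exponent_ge h0 h.le (by push_cast; linarith)
    rcases le_or_gt r v with h5 | h5
    · nlinarith [mul_le_mul_of_nonneg_right h5 (sq_nonneg v)]
    · have h6 : v ^ 2 ≤ r ^ 2 := by nlinarith
      nlinarith [mul_le_mul_of_nonneg_left h6 hr]

lemma grad_testVec {ψ : E3 → ℝ} (hψ : Tst ψ) : IsTestVec 1 univ (fun x i => pd ψ i x) := by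
  refine ⟨?_, ?_, subset_univ _⟩
  · exact contDiff_pi.2 fun i => (hψ.pd i).1.of_le (by exact_mod_cast le_top)
  · refine HasCompactSupport.intro hψ.2.1 fun x hx => ?_
    funext i
    simp [pd, fderiv_of_notMem_tsupport ℝ hx]

lemma memLp_u {u : E3 → Fin 3 → ℝ} {du : E3 → Fin 3 → Fin 3 → ℝ} (hm : AEMeasurable u volume)
    (h : MemD012 univ u du) : MemLp u 6 volume := by
  obtain ⟨-, -, -, un, ht, -, h6⟩ := h
  simp only [Measure.restrict_univ] at h6
  obtain ⟨n, hn⟩ := (h6.eventually (gt_mem_nhds (show (0 : ENNReal) < 1 by simp))).exists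
  have hd : MemLp (fun x => un n x - u x) 6 volume :=
    ⟨((ht n).1.continuous.aestronglyMeasurable).sub hm.aestronglyMeasurable,
      hn.trans ENNReal.one_lt_top⟩
  have hun : MemLp (un n) 6 volume :=
    (ht n).1.continuous.memLp_of_hasCompactSupport (ht n).2.1
  have := hun.sub hd
  refine this.congr_norm hm.aestronglyMeasurable (Eventually.of_forall fun x => ?_)
  simp

lemma memLp_comp {ι : Type*} [Fintype ι] {f : E3 → ι → ℝ} {p : ENNReal} (hf : MemLp f p volume)
    (i : ι) : MemLp (fun x => f x i) p volume := by
  refine hf.of_le ?_ (Eventually.of_forall fun x => norm_le_pi_norm (f x) i)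
  exact (continuous_apply i).comp_aestronglyMeasurable hf.1

lemma memLp_Smat {μ η : ℝ} {du : E3 → Fin 3 → Fin 3 → ℝ} (h : MemLp du 2 volume) (i j : Fin 3) :
    MemLp (fun x => Smat μ η (du x) i j) 2 volume := by
  have hc : ∀ i j, MemLp (fun x => du x i j) 2 volume := by
    intro i j
    refine h.of_le ?_ (Eventually.of_forall fun x =>
      (norm_le_pi_norm (du x i) j).trans (norm_le_pi_norm (du x) i))
    exact ((continuous_apply j).comp (continuous_apply i)).comp_aestronglyMeasurable h.1
  have ht : MemLp (fun x => ∑ k, du x k k) 2 volume := memLp_finsetSum _ fun k _ => hc k k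
  unfold Smat
  exact (((((hc i j).add (hc j i)).sub ((ht.const_mul _).mul_const _))).const_mul μ).add
    ((ht.const_mul η).mul_const _)

theorem main_two
    (μ η γ : ℝ) (hγ1 : 3 ≤ γ) (hγ2 : γ < 6)
    (G : E3 → ℝ) (dG : E3 → Fin 3 → ℝ)
    (ρ : E3 → ℝ) (u : E3 → Fin 3 → ℝ) (du : E3 → Fin 3 → Fin 3 → ℝ)
    (hG : MemD01q univ G dG (6 * γ / (5 * γ - 6)))
    (hsol : IsentropicWeakSolution μ η γ G dG ρ u du)
    (hργ : MemLp ρ (ENNReal.ofReal γ) volume) :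
    MemLp (fun x => ρ x ^ γ) 2 volume := by
  have hγ0 : 0 < γ := by linarith
  have hρ0 : ∀ᵐ x, 0 ≤ ρ x := by simpa using hsol.ρ_nonneg
  have hρm : AEMeasurable ρ volume := hsol.aemeas_ρ
  have hpI : Integrable (fun x => ρ x ^ γ) volume := by
    have := hργ.integrable_norm_rpow (by simpa using hγ0) (by simp)
    rw [ENNReal.toReal_ofReal hγ0.le] at this
    refine this.congr ?_
    filter_upwards [hρ0] with x hx
    rw [Real.norm_of_nonneg hx]
  have hu6 : MemLp u 6 volume := memLp_u hsol.aemeas_u hsol.u_D012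
  -- the remainder in the Young inequality
  set H : E3 → ℝ := fun x => ρ x ^ (γ / 2) + 5 * ‖u x‖ ^ 3 with hH
  have hH2 : MemLp H 2 volume := by
    refine MemLp.add ?_ (MemLp.const_mul ?_ 5)
    · refine (memLp_two_iff_integrable_sq (hρm.pow_const _).aestronglyMeasurable).2 ?_
      refine hpI.congr ?_
      filter_upwards [hρ0] with x hx
      rw [← Real.rpow_natCast, ← Real.rpow_mul hx]
      congr 1; push_cast; ring
    · refine (memLp_two_iff_integrable_sq (hu6.1.norm.pow 3)).2 ?_
      have := hu6.integrable_norm_pow (by norm_num)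
      refine this.congr (Eventually.of_forall fun x => ?_)
      simp only [Pi.pow_apply, ← pow_mul]
  have hH0 : ∀ᵐ x, 0 ≤ H x := by
    filter_upwards [hρ0] with x hx
    have := Real.rpow_nonneg hx (γ / 2)
    positivity
  have hdu : MemLp du 2 volume := by simpa using hsol.u_D012.2.2.1
  have hF : ∀ i, MemLp (fun x => ρ x * dG x i) (6 / 5 : ENNReal) volume := by
    intro i
    have hdG : MemLp dG (ENNReal.ofReal (6 * γ / (5 * γ - 6))) volume := by
      simpa using hG.2.1
    have hi := memLp_comp hdG i
    have : ENNReal.HolderTriple (ENNReal.ofReal (6 * γ / (5 * γ - 6))) (ENNReal.ofReal γ)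
        (6 / 5 : ENNReal) := by
      constructor
      have h56 : 0 < 5 * γ - 6 := by linarith
      rw [← ENNReal.ofReal_inv_of_pos (by positivity), ← ENNReal.ofReal_inv_of_pos hγ0,
        ← ENNReal.ofReal_add (by positivity) (by positivity)]
      have : (6 / 5 : ENNReal) = ENNReal.ofReal (6 / 5) := by
        rw [ENNReal.ofReal_div_of_pos (by norm_num)]; simp
      rw [this, ← ENNReal.ofReal_inv_of_pos (by norm_num)]
      congr 1
      field_simp
      ring
    exact hi.mul hργ
  obtain ⟨C, hC0, hC⟩ := sobolev
  set KS : ℝ := ∑ i, ∑ j, N2 (fun x => Smat μ η (du x) i j) with hKS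
  set KF : ℝ := ∑ i, (∫ x, |ρ x * dG x i| ^ (6 / 5 : ℝ)) ^ (1 / (6 / 5 : ℝ)) with hKF
  have hKF0 : 0 ≤ KF := Finset.sum_nonneg fun i _ => by positivity
  have hKS0 : 0 ≤ KS := Finset.sum_nonneg fun i _ => Finset.sum_nonneg fun j _ => N2_nonneg _
  have hp0 : ∀ᵐ x, 0 ≤ ρ x ^ γ := by
    filter_upwards [hρ0] with x hx using Real.rpow_nonneg hx _
  refine memLp_two_of_dual hpI hp0 (κ := 1 / 25) (K := 9 * N2 H + KS + C * KF) (by norm_num)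
    (by norm_num) (by have := N2_nonneg H; positivity) fun ψ hψ => ?_
  set D : Fin 3 → Fin 3 → E3 → ℝ := fun i j => pd (pd ψ i) j with hD
  have hDt : ∀ i j, Tst (D i j) := fun i j => (hψ.pd i).pd j
  have hmom := hsol.momentum _ (grad_testVec hψ)
  simp only [Measure.restrict_univ] at hmom
  change ∫ x, ((∑ i, ∑ j, ρ x * u x i * u x j * D i j x) + ρ x ^ γ * lap ψ x)
    = (∫ x, ∑ i, ∑ j, Smat μ η (du x) i j * D i j x)
        - ∫ x, ∑ i, ρ x * dG x i * pd ψ i x at hmom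
  -- integrability of the majorants
  have iP : ∀ i j, Integrable (fun x => ρ x ^ γ * |D i j x|) volume := by
    intro i j
    obtain ⟨B, hB⟩ := (hDt i j).2.1.exists_bound_of_continuous (hDt i j).1.continuous
    exact hpI.mul_bdd (c := B) (hDt i j).1.continuous.abs.aestronglyMeasurable
      (Eventually.of_forall fun x => by simpa using hB x)
  have iH : ∀ i j, Integrable (fun x => H x * |D i j x|) volume := fun i j =>
    hH2.integrable_mul ((hDt i j).memLp 2).abs
  have hum : ∀ i, AEStronglyMeasurable (fun x => u x i) volume := fun i =>
    (continuous_apply i).comp_aestronglyMeasurable hu6.1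
  have bd : ∀ i j, ∀ᵐ x, |ρ x * u x i * u x j * D i j x|
      ≤ (1 / 25) * (ρ x ^ γ * |D i j x|) + H x * |D i j x| := by
    intro i j
    filter_upwards [hρ0] with x hx
    rw [abs_mul, abs_mul, abs_mul, abs_of_nonneg hx]
    have hy := young hγ1 hγ2 hx (norm_nonneg (u x))
    have h1 : |u x i| ≤ ‖u x‖ := norm_le_pi_norm (u x) i
    have h2 : |u x j| ≤ ‖u x‖ := norm_le_pi_norm (u x) j
    have h3 : ρ x * |u x i| * |u x j| ≤ ρ x * ‖u x‖ ^ 2 := by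
      rw [mul_assoc, pow_two]
      gcongr
    calc ρ x * |u x i| * |u x j| * |D i j x|
        ≤ ((1 / 25) * ρ x ^ γ + H x) * |D i j x| :=
          mul_le_mul_of_nonneg_right (h3.trans hy) (abs_nonneg _)
      _ = _ := by ring
  have iM : ∀ i j, Integrable (fun x => (1 / 25) * (ρ x ^ γ * |D i j x|) + H x * |D i j x|)
      volume := fun i j => ((iP i j).const_mul _).add (iH i j)
  have iA : ∀ i j, Integrable (fun x => ρ x * u x i * u x j * D i j x) volume := fun i j =>
    (iM i j).mono' (((hρm.aestronglyMeasurable.mul (hum i)).mul (hum j)).mul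
      (hDt i j).1.continuous.aestronglyMeasurable) (bd i j)
  have hA : |∫ x, ∑ i, ∑ j, ρ x * u x i * u x j * D i j x|
      ≤ (1 / 25) * (∑ i, ∑ j, ∫ x, ρ x ^ γ * |D i j x|) + 9 * N2 H * N2 (lap ψ) := by
    rw [integral_finsetSum _ fun i _ => integrable_finsetSum _ fun j _ => iA i j]
    have h1 : ∀ i j, |∫ x, ρ x * u x i * u x j * D i j x|
        ≤ (1 / 25) * (∫ x, ρ x ^ γ * |D i j x|) + N2 H * N2 (lap ψ) := by
      intro i j
      refine (abs_integral_le_integral_abs).trans ?_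
      refine (integral_mono_ae (iA i j).abs (iM i j) (bd i j)).trans ?_
      rw [integral_add ((iP i j).const_mul _) (iH i j), integral_const_mul]
      have h2 : ∫ x, H x * |D i j x| ≤ N2 H * N2 (lap ψ) := by
        refine le_trans (le_of_eq ?_) ((int_abs_mul_le hH2 ((hDt i j).memLp 2)).trans
          (mul_le_mul_of_nonneg_left (N2_hess hψ i j) (N2_nonneg _)))
        refine integral_congr_ae ?_
        filter_upwards [hH0] with x hx
        rw [abs_of_nonneg hx]
      linarith
    refine (Finset.abs_sum_le_sum_abs _ _).trans ?_
    have h3 : ∀ i, |∫ x, ∑ j, ρ x * u x i * u x j * D i j x|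
        ≤ ∑ j, ((1 / 25) * (∫ x, ρ x ^ γ * |D i j x|) + N2 H * N2 (lap ψ)) := by
      intro i
      rw [integral_finsetSum _ fun j _ => iA i j]
      exact (Finset.abs_sum_le_sum_abs _ _).trans (Finset.sum_le_sum fun j _ => h1 i j)
    refine (Finset.sum_le_sum fun i _ => h3 i).trans (le_of_eq ?_)
    simp only [Finset.sum_add_distrib, ← Finset.mul_sum, Finset.sum_const, Finset.card_univ,
      Fintype.card_fin, nsmul_eq_mul]
    push_cast; ring
  have hSm : ∀ i j, MemLp (fun x => Smat μ η (du x) i j) 2 volume := fun i j => memLp_Smat hdu i j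
  have hS : |∫ x, ∑ i, ∑ j, Smat μ η (du x) i j * D i j x| ≤ KS * N2 (lap ψ) := by
    have iS : ∀ i j, Integrable (fun x => Smat μ η (du x) i j * D i j x) volume := fun i j =>
      (hSm i j).integrable_mul ((hDt i j).memLp 2)
    rw [integral_finsetSum _ fun i _ => integrable_finsetSum _ fun j _ => iS i j]
    rw [hKS, Finset.sum_mul]
    refine (Finset.abs_sum_le_sum_abs _ _).trans (Finset.sum_le_sum fun i _ => ?_)
    rw [integral_finsetSum _ fun j _ => iS i j, Finset.sum_mul]
    refine (Finset.abs_sum_le_sum_abs _ _).trans (Finset.sum_le_sum fun j _ => ?_)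
    exact (abs_int_mul_le (hSm i j) ((hDt i j).memLp 2)).trans
      (mul_le_mul_of_nonneg_left (N2_hess hψ i j) (N2_nonneg _))
  have hFF : |∫ x, ∑ i, ρ x * dG x i * pd ψ i x| ≤ C * KF * N2 (lap ψ) := by
    have h65 : (6 / 5 : ENNReal) = ENNReal.ofReal (6 / 5) := by
      rw [ENNReal.ofReal_div_of_pos (by norm_num)]; simp
    have hcj : Real.HolderConjugate (6 / 5) 6 := by
      rw [Real.holderConjugate_iff]; norm_num
    have hb : ∀ i, Integrable (fun x => ρ x * dG x i * pd ψ i x) volume := by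
      intro i
      have : ENNReal.HolderConjugate (6 / 5 : ENNReal) 6 := by
        rw [h65, show (6 : ENNReal) = ENNReal.ofReal 6 by simp]
        exact hcj.ennrealOfReal
      exact (hF i).integrable_mul ((hψ.pd i).memLp 6)
    rw [integral_finsetSum _ fun i _ => hb i]
    rw [hKF, Finset.mul_sum, Finset.sum_mul]
    refine (Finset.abs_sum_le_sum_abs _ _).trans (Finset.sum_le_sum fun i _ => ?_)
    have h1 := integral_mul_norm_le_Lp_mul_Lq (μ := (volume : Measure E3))
      (f := fun x => ρ x * dG x i) (g := pd ψ i) hcj (by rw [← h65]; exact hF i)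
      ((hψ.pd i).memLp _)
    refine (abs_integral_le_integral_abs).trans ?_
    have h2 : ∫ x, |ρ x * dG x i * pd ψ i x| = ∫ x, ‖ρ x * dG x i‖ * ‖pd ψ i x‖ := by
      congr 1; funext x; rw [abs_mul]; rfl
    rw [h2]
    refine h1.trans ?_
    have h3 := hC ψ hψ i
    calc _ ≤ (∫ x, |ρ x * dG x i| ^ (6 / 5 : ℝ)) ^ (1 / (6 / 5 : ℝ)) * (C * N2 (lap ψ)) :=
          mul_le_mul_of_nonneg_left h3 (by positivity)
      _ = _ := by ring
  have iL : Integrable (fun x => ρ x ^ γ * lap ψ x) volume := by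
    obtain ⟨B, hB⟩ := hψ.lap.2.1.exists_bound_of_continuous hψ.lap.1.continuous
    exact hpI.mul_bdd (c := B) hψ.lap.1.continuous.aestronglyMeasurable (Eventually.of_forall hB)
  rw [integral_add (integrable_finsetSum _ fun i _ => integrable_finsetSum _ fun j _ => iA i j) iL]
    at hmom
  have e : ∫ x, ρ x ^ γ * lap ψ x = (∫ x, ∑ i, ∑ j, Smat μ η (du x) i j * D i j x)
        - (∫ x, ∑ i, ρ x * dG x i * pd ψ i x)
        - ∫ x, ∑ i, ∑ j, ρ x * u x i * u x j * D i j x := by linarith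
  rw [e]
  rw [abs_le] at hA hS hFF ⊢
  constructor <;> nlinarith [hA.1, hA.2, hS.1, hS.2, hFF.1, hFF.2]

/-- **Corollary.** Let `(ρ, u)` be a weak solution of the stationary isentropic system on `ℝ³`
with `3 ≤ γ < 6` and `G ∈ D₀^{1, 6γ/(5γ−6)}(ℝ³)`. If `ρ ∈ L^γ(ℝ³)`, then
`ρ ∈ L^{2γ}(ℝ³)`. -/
theorem higher_integrability_Lgamma
    (μ η γ : ℝ) (hμ : 0 < μ) (hη : 0 ≤ η) (hγ1 : 3 ≤ γ) (hγ2 : γ < 6)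
    (G : E3 → ℝ) (dG : E3 → Fin 3 → ℝ)
    (ρ : E3 → ℝ) (u : E3 → Fin 3 → ℝ) (du : E3 → Fin 3 → Fin 3 → ℝ)
    (hG : MemD01q univ G dG (6 * γ / (5 * γ - 6)))
    (hsol : IsentropicWeakSolution μ η γ G dG ρ u du)
    (hργ : MemLp ρ (ENNReal.ofReal γ) volume) :
    MemLp ρ (ENNReal.ofReal (2 * γ)) volume := by
  have h := main_two μ η γ hγ1 hγ2 G dG ρ u du hG hsol hργ
  have hγ0 : 0 < γ := by linarith
  have hρ0 : ∀ᵐ x, 0 ≤ ρ x := by simpa using hsol.ρ_nonneg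
  rw [← memLp_norm_rpow_iff (q := ENNReal.ofReal γ) hργ.1 (by simpa using hγ0) (by simp)]
  have e : ENNReal.ofReal (2 * γ) / ENNReal.ofReal γ = 2 := by
    rw [← ENNReal.ofReal_div_of_pos hγ0]
    field_simp
    simp
  rw [e, ENNReal.toReal_ofReal hγ0.le]
  refine h.ae_eq ?_
  filter_upwards [hρ0] with x hx
  rw [Real.norm_of_nonneg hx]
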